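/- Let w₁, w₂ ∈ S_m and set B := N(w₁) ∩ N(w₂); assume B is nonempty and pairwise orthogonal. Then the following two assertions are equivalent: (1) there exist w₁', w₂' ∈ S_m with N(w₁) ⊆ N(w₁'), N(w₂) ⊆ N(w₂'), N(w₁') ∩ N(w₂') = B, and N(w₁') ∪ N(w₂') = {(i,j) | 1 ≤ i < j ≤ m}; (2) there exist w₁'', u, x ∈ S_m with N(w₁) ⊆ N(w₁''), w₁'' = u·x, |N(w₁'')| = |N(u)| + |N(x)|, |N(x)| = |B|, and B = {(u(i), u(j)) : (i,j) ∈ N(x)} with u(i) < u(j) for every (i,j) ∈ N(x). -/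

import Mathlib

/-- The inversion set `N(w) = {(i,j) | i < j, w⁻¹(i) > w⁻¹(j)}` of a permutation,
realizing `Φ⁺(w)` in type `A_{m−1}`. -/
def invSet (m : ℕ) (w : Equiv.Perm (Fin m)) : Finset (Fin m × Fin m) :=
  Finset.univ.filter (fun p => p.1 < p.2 ∧ w⁻¹ p.2 < w⁻¹ p.1)

/-- A pair `(k, k+1)`, corresponding to a simple root. -/
def IsSimplePair {m : ℕ} (p : Fin m × Fin m) : Prop :=
  (p.1 : ℕ) + 1 = (p.2 : ℕ)

instance {m : ℕ} : DecidablePred (IsSimplePair (m := m)) :=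
  fun p => inferInstanceAs (Decidable ((p.1 : ℕ) + 1 = (p.2 : ℕ)))

/-- Orthogonality of the roots `e_i − e_j` and `e_k − e_l`: `{i,j} ∩ {k,l} = ∅`. -/
def OrthPair {m : ℕ} (p q : Fin m × Fin m) : Prop :=
  p.1 ≠ q.1 ∧ p.1 ≠ q.2 ∧ p.2 ≠ q.1 ∧ p.2 ≠ q.2

/-- A set of pairs is pairwise orthogonal. -/
def PairwiseOrth {m : ℕ} (B : Finset (Fin m × Fin m)) : Prop :=
  ∀ p ∈ B, ∀ q ∈ B, p ≠ q → OrthPair p q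

theorem mem_invSet {m : ℕ} {w : Equiv.Perm (Fin m)} {a b : Fin m} :
    (a, b) ∈ invSet m w ↔ a < b ∧ w⁻¹ b < w⁻¹ a := by
  simp [invSet]

/-- Swapping an adjacent ascent adds exactly one inversion. -/
theorem invSet_swap {m : ℕ} (w : Equiv.Perm (Fin m)) (a b : Fin m) (hab : a < b)
    (hq : ((w⁻¹ b : Fin m) : ℕ) = (w⁻¹ a : Fin m) + 1) :
    invSet m (Equiv.swap a b * w) = insert (a, b) (invSet m w) := by
  ext ⟨c, d⟩
  rw [Finset.mem_insert, mem_invSet, mem_invSet, mul_inv_rev, Equiv.swap_inv,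
    Equiv.Perm.mul_apply, Equiv.Perm.mul_apply, Prod.mk.injEq]
  have inj : ∀ x y : Fin m, ((w⁻¹ x : Fin m) : ℕ) = (w⁻¹ y : Fin m) → x = y :=
    fun x y h => w⁻¹.injective (Fin.ext h)
  have h1 := inj c a
  have h2 := inj c b
  have h3 := inj d a
  have h4 := inj d b
  simp only [Fin.lt_def] at *
  rw [Equiv.swap_apply_def, Equiv.swap_apply_def]
  split_ifs <;> grind

theorem adj_mem {m : ℕ} {w w2 : Equiv.Perm (Fin m)} {B : Finset (Fin m × Fin m)}
    (h : invSet m w ∩ invSet m w2 = B)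
    (hmax : ∀ w', invSet m w ⊆ invSet m w' → invSet m w' ∩ invSet m w2 = B →
      invSet m w' ⊆ invSet m w)
    (a b : Fin m) (hab : a < b)
    (hq : ((w⁻¹ b : Fin m) : ℕ) = (w⁻¹ a : Fin m) + 1) : (a, b) ∈ invSet m w2 := by
  by_contra hn
  have hs := invSet_swap w a b hab hq
  have := hmax (Equiv.swap a b * w) (by rw [hs]; exact Finset.subset_insert _ _)
    (by rw [hs, Finset.insert_inter_of_notMem hn, h])
  have h2 : (a, b) ∈ invSet m w := this (by rw [hs]; exact Finset.mem_insert_self _ _)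
  rw [mem_invSet] at h2
  have := h2.2
  simp only [Fin.lt_def] at this
  omega

/-- For a maximal `w`, the pairs in `B` are adjacent in the word of `w`. -/
theorem tight {m : ℕ} {w w2 : Equiv.Perm (Fin m)} {B : Finset (Fin m × Fin m)}
    (h : invSet m w ∩ invSet m w2 = B) (horth : PairwiseOrth B)
    (hadj : ∀ a b : Fin m, a < b → ((w⁻¹ b : Fin m) : ℕ) = (w⁻¹ a : Fin m) + 1 →
      (a, b) ∈ invSet m w2)
    (i j : Fin m) (hij : (i, j) ∈ B) :
    ((w⁻¹ i : Fin m) : ℕ) = (w⁻¹ j : Fin m) + 1 := by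
  have hB : ∀ a b : Fin m, (a, b) ∈ B ↔ (a < b ∧ w⁻¹ b < w⁻¹ a) ∧ (a < b ∧ w2⁻¹ b < w2⁻¹ a) := by
    intro a b
    rw [← h, Finset.mem_inter, mem_invSet, mem_invSet]
  obtain ⟨⟨hlt, hq⟩, -, hv⟩ := (hB i j).1 hij
  have injq : ∀ x y : Fin m, ((w⁻¹ x : Fin m) : ℕ) = (w⁻¹ y : Fin m) → x = y :=
    fun x y h => w⁻¹.injective (Fin.ext h)
  have injv : ∀ x y : Fin m, ((w2⁻¹ x : Fin m) : ℕ) = (w2⁻¹ y : Fin m) → x = y :=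
    fun x y h => w2⁻¹.injective (Fin.ext h)
  -- elements strictly between
  have key1 : ∀ k, k < j → w⁻¹ j < w⁻¹ k → k ≠ i → w2⁻¹ k < w2⁻¹ j := by
    intro k hk hjk hki
    by_contra hc
    have hne : w2⁻¹ k ≠ w2⁻¹ j := fun e => hk.ne (w2⁻¹.injective e)
    have hm : (k, j) ∈ B := (hB k j).2 ⟨⟨hk, hjk⟩, hk, lt_of_le_of_ne (not_lt.1 hc) hne.symm⟩
    exact (horth _ hm _ hij (by simp [hki])).2.2.2 rfl
  have key2 : ∀ k, i < k → w⁻¹ k < w⁻¹ i → k ≠ j → w2⁻¹ i < w2⁻¹ k := by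
    intro k hk hjk hki
    by_contra hc
    have hne : w2⁻¹ k ≠ w2⁻¹ i := fun e => hk.ne' (w2⁻¹.injective e)
    have hm : (i, k) ∈ B := (hB i k).2 ⟨⟨hk, hjk⟩, hk, lt_of_le_of_ne (not_lt.1 hc) hne⟩
    exact (horth _ hm _ hij (by simp [hki])).1 rfl
  by_contra hcon
  have main : ∀ t : ℕ, ∀ k : Fin m, ((w⁻¹ k : Fin m) : ℕ) = (w⁻¹ j : Fin m) + 1 + t →
      w⁻¹ k ≤ w⁻¹ i → k < i := by
    intro t
    induction t with
    | zero =>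
      intro k hk hki
      have hkn : k ≠ i := by rintro rfl; exact hcon hk
      have hkj : k ≠ j := by rintro rfl; omega
      have a1 := key1 k
      have a2 := key2 k
      have a3 : j < k → _ := fun hh => (mem_invSet.1 (hadj j k hh hk)).2
      have := injq k i
      simp only [Fin.lt_def, Fin.le_def, ne_eq, Fin.ext_iff] at *
      grind
    | succ t ih =>
      intro k hk hki
      have hb : ((w⁻¹ k : Fin m) : ℕ) - 1 < m := by omega
      obtain ⟨l, hl⟩ : ∃ l, w⁻¹ l = ⟨((w⁻¹ k : Fin m) : ℕ) - 1, hb⟩ := w⁻¹.surjective _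
      have hl' : ((w⁻¹ l : Fin m) : ℕ) = ((w⁻¹ k : Fin m) : ℕ) - 1 := by rw [hl]
      have hli := ih l (by omega) (by simp only [Fin.le_def] at *; omega)
      have b1 := key1 l
      have a1 := key1 k
      have a2 := key2 k
      have a3 : l < k → _ := fun hh => (mem_invSet.1 (hadj l k hh (by omega))).2
      have := injq k i
      have hkj : k ≠ j := by rintro rfl; omega
      by_cases hkn : k = i
      · subst hkn
        simp only [Fin.lt_def, Fin.le_def, ne_eq, Fin.ext_iff] at *
        grind
      · simp only [Fin.lt_def, Fin.le_def, ne_eq, Fin.ext_iff] at *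
        grind
  have hq' : ((w⁻¹ j : Fin m) : ℕ) < (w⁻¹ i : Fin m) := hq
  exact lt_irrefl i (main (((w⁻¹ i : Fin m) : ℕ) - (w⁻¹ j : Fin m) - 1) i (by omega) le_rfl)

theorem cover {m : ℕ} {w w2 : Equiv.Perm (Fin m)} {B : Finset (Fin m × Fin m)}
    (h : invSet m w ∩ invSet m w2 = B) (horth : PairwiseOrth B)
    (hadj : ∀ a b : Fin m, a < b → ((w⁻¹ b : Fin m) : ℕ) = (w⁻¹ a : Fin m) + 1 →
      (a, b) ∈ invSet m w2)
    (ht : ∀ i j : Fin m, (i, j) ∈ B → ((w2⁻¹ i : Fin m) : ℕ) = (w2⁻¹ j : Fin m) + 1)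
    (a b : Fin m) (hab : a < b) (h1 : w⁻¹ a < w⁻¹ b) (h2 : w2⁻¹ a < w2⁻¹ b) : False := by
  have hB : ∀ a b : Fin m, (a, b) ∈ B ↔ (a < b ∧ w⁻¹ b < w⁻¹ a) ∧ (a < b ∧ w2⁻¹ b < w2⁻¹ a) := by
    intro a b
    rw [← h, Finset.mem_inter, mem_invSet, mem_invSet]
  have injv : ∀ x y : Fin m, ((w2⁻¹ x : Fin m) : ℕ) = (w2⁻¹ y : Fin m) → x = y :=
    fun x y h => w2⁻¹.injective (Fin.ext h)
  have step : ∀ l k : Fin m, ((w⁻¹ k : Fin m) : ℕ) = (w⁻¹ l : Fin m) + 1 →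
      w2⁻¹ k < w2⁻¹ l ∨ (k, l) ∈ B := by
    intro l k hlk
    have hne : l ≠ k := by rintro rfl; omega
    have hlt : w⁻¹ l < w⁻¹ k := by rw [Fin.lt_def]; omega
    rcases lt_or_gt_of_ne hne with hh | hh
    · exact Or.inl (mem_invSet.1 (hadj l k hh hlk)).2
    · by_cases hc : w2⁻¹ k < w2⁻¹ l
      · exact Or.inl hc
      · have hne2 : w2⁻¹ k ≠ w2⁻¹ l := fun e => hne (w2⁻¹.injective e).symm
        exact Or.inr ((hB k l).2 ⟨⟨hh, hlt⟩, hh, lt_of_le_of_ne (not_lt.1 hc) hne2.symm⟩)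
  have main : ∀ t : ℕ, ∀ k : Fin m, ((w⁻¹ k : Fin m) : ℕ) = (w⁻¹ a : Fin m) + t →
      w2⁻¹ k ≤ w2⁻¹ a ∨ ∃ l, (k, l) ∈ B ∧ w2⁻¹ l ≤ w2⁻¹ a := by
    intro t
    induction t with
    | zero =>
      intro k hk
      have : k = a := w⁻¹.injective (Fin.ext hk)
      exact Or.inl (by rw [this])
    | succ t ih =>
      intro k hk
      have hb : ((w⁻¹ k : Fin m) : ℕ) - 1 < m := by omega
      obtain ⟨l, hl⟩ : ∃ l, w⁻¹ l = ⟨((w⁻¹ k : Fin m) : ℕ) - 1, hb⟩ := w⁻¹.surjective _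
      have hl' : ((w⁻¹ l : Fin m) : ℕ) = ((w⁻¹ k : Fin m) : ℕ) - 1 := by rw [hl]
      have hs := step l k (by omega)
      rcases ih l (by omega) with hle | ⟨l', hl1, hl2⟩
      · rcases hs with hs | hs
        · exact Or.inl (hs.le.trans hle)
        · exact Or.inr ⟨l, hs, hle⟩
      · have htt := ht _ _ hl1
        rcases hs with hs | hs
        · left
          simp only [Fin.lt_def, Fin.le_def] at *
          omega
        · exfalso
          have hne : (k, l) ≠ (l, l') := by
            intro e
            have : k = l := (Prod.mk.inj e).1
            subst this
            omega
          exact (horth _ hs _ hl1 hne).2.2.1 rfl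
  have h1' : ((w⁻¹ a : Fin m) : ℕ) < (w⁻¹ b : Fin m) := h1
  rcases main (((w⁻¹ b : Fin m) : ℕ) - (w⁻¹ a : Fin m)) b (by omega) with hc | ⟨l, hl1, hl2⟩
  · exact absurd h2 (not_lt.2 hc)
  · have htt := ht _ _ hl1
    have : l = a := injv _ _ (by simp only [Fin.lt_def, Fin.le_def] at *; omega)
    subst this
    exact absurd hab (not_lt.2 ((hB _ _).1 hl1).1.1.le)

theorem fillup_exists {m : ℕ} (w₁ w₂ : Equiv.Perm (Fin m))
    (B : Finset (Fin m × Fin m)) (hB : B = invSet m w₁ ∩ invSet m w₂)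
    (horth : PairwiseOrth B) :
    ∃ w₁' w₂' : Equiv.Perm (Fin m),
        invSet m w₁ ⊆ invSet m w₁' ∧ invSet m w₂ ⊆ invSet m w₂' ∧
        invSet m w₁' ∩ invSet m w₂' = B ∧
        invSet m w₁' ∪ invSet m w₂' = Finset.univ.filter (fun p => p.1 < p.2) := by
  classical
  obtain ⟨⟨p, r⟩, hmem, hmax⟩ := Finset.exists_max_image
    ((Finset.univ : Finset (Equiv.Perm (Fin m) × Equiv.Perm (Fin m))).filter (fun z =>
      invSet m w₁ ⊆ invSet m z.1 ∧ invSet m w₂ ⊆ invSet m z.2 ∧ invSet m z.1 ∩ invSet m z.2 = B))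
    (fun z => (invSet m z.1).card + (invSet m z.2).card) ⟨(w₁, w₂), by simp [hB]⟩
  simp only [Finset.mem_filter, Finset.mem_univ, true_and, Prod.forall] at hmem hmax
  obtain ⟨hp, hr, hpr⟩ := hmem
  have hrp : invSet m r ∩ invSet m p = B := by rw [Finset.inter_comm, hpr]
  have adj1 := adj_mem hpr (fun w' hw hi => by
    have := hmax w' r ⟨hp.trans hw, hr, hi⟩
    exact (Finset.eq_of_subset_of_card_le hw (by omega)).ge)
  have adj2 := adj_mem hrp (fun w' hw hi => by
    have := hmax p w' ⟨hp, hr.trans hw, by rw [Finset.inter_comm, hi]⟩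
    exact (Finset.eq_of_subset_of_card_le hw (by omega)).ge)
  have ht := tight hrp horth adj2
  refine ⟨p, r, hp, hr, hpr, ?_⟩
  ext ⟨a, b⟩
  simp only [Finset.mem_union, mem_invSet, Finset.mem_filter, Finset.mem_univ, true_and]
  constructor
  · rintro (h | h) <;> exact h.1
  · intro hab
    by_contra hc
    have n1 : p⁻¹ a ≠ p⁻¹ b := fun e => hab.ne (p⁻¹.injective e)
    have n2 : r⁻¹ a ≠ r⁻¹ b := fun e => hab.ne (r⁻¹.injective e)
    refine cover hpr horth adj1 ht a b hab ?_ ?_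
    · exact lt_of_le_of_ne (not_lt.1 fun h => hc (Or.inl ⟨hab, h⟩)) n1
    · exact lt_of_le_of_ne (not_lt.1 fun h => hc (Or.inr ⟨hab, h⟩)) n2

/-- Equivalence of the two assertions of the main Weyl group theorem: filling up `w₁, w₂`
so that their inversion sets intersect in `B` and cover everything, versus having an
extension `w₁''` with a reduced expression ending in the roots of `B`. -/
theorem fillup_iff_block {m : ℕ} (w₁ w₂ : Equiv.Perm (Fin m))
    (B : Finset (Fin m × Fin m)) (hB : B = invSet m w₁ ∩ invSet m w₂)
    (hne : B.Nonempty) (horth : PairwiseOrth B) :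
    (∃ w₁' w₂' : Equiv.Perm (Fin m),
        invSet m w₁ ⊆ invSet m w₁' ∧ invSet m w₂ ⊆ invSet m w₂' ∧
        invSet m w₁' ∩ invSet m w₂' = B ∧
        invSet m w₁' ∪ invSet m w₂' = Finset.univ.filter (fun p => p.1 < p.2))
    ↔ (∃ w u x : Equiv.Perm (Fin m),
        invSet m w₁ ⊆ invSet m w ∧ w = u * x ∧
        (invSet m w).card = (invSet m u).card + (invSet m x).card ∧
        (invSet m x).card = B.card ∧
        B = (invSet m x).image (fun p => (u p.1, u p.2)) ∧
        ∀ p ∈ invSet m x, u p.1 < u p.2) := by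
  refine ⟨fun h => ?_, fun _ => fillup_exists w₁ w₂ B hB horth⟩
  obtain ⟨w, r, hw, -, hint, hun⟩ := h
  have hB' : ∀ a b : Fin m, (a, b) ∈ B ↔ (a < b ∧ w⁻¹ b < w⁻¹ a) ∧ (a < b ∧ r⁻¹ b < r⁻¹ a) := by
    intro a b
    rw [← hint, Finset.mem_inter, mem_invSet, mem_invSet]
  have hU : ∀ a b : Fin m, a < b → w⁻¹ b < w⁻¹ a ∨ r⁻¹ b < r⁻¹ a := by
    intro a b hab
    have : (a, b) ∈ invSet m w ∪ invSet m r := by rw [hun]; simp [hab]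
    rw [Finset.mem_union, mem_invSet, mem_invSet] at this
    tauto
  obtain ⟨u, hu⟩ : ∃ u : Equiv.Perm (Fin m), ∀ a b, u⁻¹ a < u⁻¹ b ↔ r⁻¹ b < r⁻¹ a := by
    refine ⟨r * Fin.revPerm, fun a b => ?_⟩
    rw [mul_inv_rev, Equiv.Perm.mul_apply, Equiv.Perm.mul_apply]
    exact Fin.rev_lt_rev
  have hx : ∀ i j, (i, j) ∈ invSet m (u⁻¹ * w) ↔ (u i, u j) ∈ B := by
    intro i j
    rw [mem_invSet, mul_inv_rev, inv_inv, Equiv.Perm.mul_apply, Equiv.Perm.mul_apply, hB']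
    have e := hu (u i) (u j)
    have e1 : ∀ y, u⁻¹ (u y) = y := fun y => u.symm_apply_apply y
    rw [e1, e1] at e
    rw [e]
    constructor
    · rintro ⟨h1, h2⟩
      have : u i < u j := by
        by_contra hc
        rcases (not_lt.1 hc).lt_or_eq with hc | hc
        · rcases hU _ _ hc with h | h
          · exact lt_asymm h h2
          · exact lt_asymm h h1
        · rw [hc] at h1
          exact lt_irrefl _ h1
      exact ⟨⟨this, h2⟩, this, h1⟩
    · rintro ⟨h1, h2⟩
      exact ⟨h2.2, h1.2⟩
  have himg : B = (invSet m (u⁻¹ * w)).image (fun p => (u p.1, u p.2)) := by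
    ext ⟨a, b⟩
    simp only [Finset.mem_image, Prod.exists, Prod.mk.injEq]
    constructor
    · intro h
      refine ⟨u⁻¹ a, u⁻¹ b, ?_, by simp, by simp⟩
      rw [hx]
      simpa using h
    · rintro ⟨i, j, h, rfl, rfl⟩
      exact (hx i j).1 h
  have hcard : (invSet m (u⁻¹ * w)).card = B.card := by
    conv_rhs => rw [himg]
    rw [Finset.card_image_of_injective]
    rintro ⟨a, b⟩ ⟨c, d⟩ h
    simpa using h
  refine ⟨w, u, u⁻¹ * w, hw, by simp, ?_, hcard, himg, ?_⟩
  · rw [hcard, ← Finset.card_union_of_disjoint]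
    · congr 1
      ext ⟨a, b⟩
      rw [Finset.mem_union, hB', mem_invSet, mem_invSet, hu]
      constructor
      · rintro ⟨h1, h2⟩
        rcases lt_trichotomy (r⁻¹ a) (r⁻¹ b) with h | h | h
        · exact Or.inl ⟨h1, h⟩
        · exact absurd (r⁻¹.injective h) h1.ne
        · exact Or.inr ⟨⟨h1, h2⟩, h1, h⟩
      · rintro (h | h)
        · exact ⟨h.1, (hU a b h.1).resolve_right (lt_asymm h.2)⟩
        · exact h.1
    · rw [Finset.disjoint_left]
      rintro ⟨a, b⟩ h1 h2
      rw [mem_invSet, hu] at h1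
      exact lt_asymm h1.2 ((hB' a b).1 h2).2.2
  · rintro ⟨i, j⟩ h
    exact ((hB' _ _).1 ((hx i j).1 h)).1.1
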